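/- Let τ ∈ iℝ_{>0}, so 0 < q = exp(2πiτ) < 1. Let λ ∈ ℝ, α, β ∈ 2ℤ_{>0} and ρ, σ ∈ ℝ_{≥3}, and let (a,b,c,d) = (1+ρ+σ, 1−ρ+σ, 1+α+ρ−β−σ, 1−α−ρ−β−σ). Define Δ(x) = [ Γ_{2τ}(−1+1/(2τ)+a−x)·Γ_{2τ}(−1+1/(2τ)+b−x) ] / [ Γ_{2τ}(1+1/(2τ)−c−x)·Γ_{2τ}(1+1/(2τ)−d−x) ] and F_λ(x) = Δ(x)^{-1}·φ_λ(x), where φ_λ is the matrix-coefficient integral of Theorem 'main1'. Then for every x ∈ iℝ with q^{2x} ∉ {1, q^{2}, q^{−2}} at which Δ(x), Δ(x+2) and Δ(x−2) are defined and nonzero (which holds for generic ρ and σ), F_λ satisfies the Askey–Wilson second order difference equation A(x)·(F_λ(x+2) − F_λ(x)) + A(−x)·(F_λ(x−2) − F_λ(x)) = E(λ;β)·F_λ(x). -/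

import Mathlib

noncomputable section

open Complex MeasureTheory

/-- `q^u = exp(2πiτu)`. -/
def qpow (τ u : ℂ) : ℂ := Complex.exp (2 * (Real.pi : ℂ) * Complex.I * τ * u)

/-- The q-gamma type function `Γ_τ(x) = q^{−x²/16} / (−q^{(x+1)/2}; q)_∞`. -/
def qGamma (τ x : ℂ) : ℂ :=
  qpow τ (-(x ^ 2) / 16) / ∏' n : ℕ, (1 + qpow τ ((x + 1) / 2 + (n : ℂ)))

/-- The Askey-Wilson coefficient `A(x)`. -/
def awA (τ a b c d x : ℂ) : ℂ :=
  ((1 - qpow τ (a + x)) * (1 - qpow τ (b + x)) * (1 - qpow τ (c + x)) * (1 - qpow τ (d + x))) /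
    ((1 - qpow τ (2 * x)) * (1 - qpow τ (2 + 2 * x)))

/-- The eigenvalue `E(λ;β)`. -/
def eigenE (τ lam β : ℂ) : ℂ :=
  -1 - qpow τ (2 - 2 * β) +
    qpow τ (1 - β) * (qpow τ (2 * Complex.I * lam) + qpow τ (-(2 * Complex.I * lam)))

/-- The matrix coefficient `φ_λ(x)`. -/
def phiMat (τ lam α ρ β σ x : ℂ) : ℂ :=
  ∫ y in (0 : ℝ)..1,
    (qGamma (2 * τ) (-(2 * τ)⁻¹ + β + σ - Complex.I * lam + x + (y : ℂ) / τ) *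
          qGamma (2 * τ) (-1 - (2 * τ)⁻¹ + σ - Complex.I * lam - x - (y : ℂ) / τ) /
        (qGamma (2 * τ) (-(2 * τ)⁻¹ + β + σ + Complex.I * lam - x - (y : ℂ) / τ) *
          qGamma (2 * τ) (1 - (2 * τ)⁻¹ + σ + Complex.I * lam + x + (y : ℂ) / τ))) *
      (qGamma (2 * τ) (-1 + (2 * τ)⁻¹ + α + ρ + Complex.I * lam - (y : ℂ) / τ) *
          qGamma (2 * τ) ((2 * τ)⁻¹ + ρ + Complex.I * lam + (y : ℂ) / τ) /
        (qGamma (2 * τ) (1 + (2 * τ)⁻¹ + α + ρ - Complex.I * lam + (y : ℂ) / τ) *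
          qGamma (2 * τ) ((2 * τ)⁻¹ + ρ - Complex.I * lam - (y : ℂ) / τ)))

/-- The gauge factor
`Δ(x) = Γ_{2τ}(−1+1/(2τ)+a−x)·Γ_{2τ}(−1+1/(2τ)+b−x) /
  (Γ_{2τ}(1+1/(2τ)−c−x)·Γ_{2τ}(1+1/(2τ)−d−x))`. -/
def gaugeDelta (τ a b c d x : ℂ) : ℂ :=
  (qGamma (2 * τ) (-1 + (2 * τ)⁻¹ + a - x) * qGamma (2 * τ) (-1 + (2 * τ)⁻¹ + b - x)) /
    (qGamma (2 * τ) (1 + (2 * τ)⁻¹ - c - x) * qGamma (2 * τ) (1 + (2 * τ)⁻¹ - d - x))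

/-- The pole set of `Γ_{2τ}`. -/
def qGamma2Poles (τ : ℂ) : Set ℂ :=
  {u : ℂ | ∃ k l : ℤ, k ≤ 0 ∧
    u = -1 + (2 * τ)⁻¹ + 2 * (k : ℂ) + 2 * (2 * τ)⁻¹ * (l : ℂ)}

/-- `Δ(x)` is defined at `x`, i.e. the arguments of the four q-gamma factors
avoid the poles of `Γ_{2τ}`. -/
def gaugeDeltaDefined (τ a b c d x : ℂ) : Prop :=
  (-1 + (2 * τ)⁻¹ + a - x) ∉ qGamma2Poles τ ∧
  (-1 + (2 * τ)⁻¹ + b - x) ∉ qGamma2Poles τ ∧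
  (1 + (2 * τ)⁻¹ - c - x) ∉ qGamma2Poles τ ∧
  (1 + (2 * τ)⁻¹ - d - x) ∉ qGamma2Poles τ

def PP (p u : ℂ) : ℂ := ∏' n : ℕ, (1 - u * p ^ n)

lemma PP_summable (p u : ℂ) (hp : ‖p‖ < 1) : Summable (fun n : ℕ => ‖-(u * p ^ n)‖) := by
  simp only [norm_neg, norm_mul, norm_pow]
  exact (summable_geometric_of_lt_one (norm_nonneg _) hp).mul_left _

lemma PP_mult (p u : ℂ) (hp : ‖p‖ < 1) : Multipliable (fun n : ℕ => (1 - u * p ^ n)) := by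
  simpa [sub_eq_add_neg] using multipliable_one_add_of_summable (PP_summable p u hp)

lemma PP_step (p u v : ℂ) (hp : ‖p‖ < 1) (hv : v = u * p) : PP p u = (1 - u) * PP p v := by
  subst hv
  unfold PP
  rw [tprod_eq_zero_mul']
  · simp [pow_succ', mul_assoc]
  · simpa [pow_succ', mul_assoc] using PP_mult p (u * p) hp

lemma PP_ne_zero (p u : ℂ) (hp : ‖p‖ < 1) (hu : ‖u‖ < 1) : PP p u ≠ 0 := by
  have := tprod_one_add_ne_zero_of_summable (f := fun n : ℕ => -(u * p ^ n)) ?_ (PP_summable p u hp)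
  · simpa [PP, sub_eq_add_neg] using this
  · intro n h
    have h1 : u * p ^ n = 1 := by linear_combination -h
    have h2 : ‖u * p ^ n‖ < 1 := by
      rw [norm_mul, norm_pow]
      calc ‖u‖ * ‖p‖ ^ n ≤ ‖u‖ * 1 := by
            gcongr; exact pow_le_one₀ (norm_nonneg _) hp.le
        _ < 1 := by linarith
    rw [h1] at h2; simp at h2

lemma PP_diff (p : ℂ) (hp : ‖p‖ < 1) : Differentiable ℂ (PP p) := by
  intro u
  have h : MultipliableLocallyUniformlyOn (fun (n : ℕ) u => 1 + -(u * p ^ n)) (Metric.ball (0:ℂ) (‖u‖ + 1)) := by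
    refine Summable.multipliableLocallyUniformlyOn_nat_one_add (u := fun n => (‖u‖ + 1) * ‖p‖ ^ n) Metric.isOpen_ball ?_ ?_ ?_
    · exact (summable_geometric_of_lt_one (norm_nonneg _) hp).mul_left _
    · refine Filter.Eventually.of_forall fun n x hx => ?_
      simp only [norm_neg, norm_mul, norm_pow]
      have : ‖x‖ < ‖u‖ + 1 := by simpa using hx
      gcongr
    · intro n; fun_prop
  have h2 := h.hasProdLocallyUniformlyOn.tendstoLocallyUniformlyOn_finsetRange.differentiableOn ?_ Metric.isOpen_ball
  · have h3 : DifferentiableAt ℂ (fun u => ∏' n : ℕ, (1 + -(u * p ^ n))) u := h2.differentiableAt (Metric.isOpen_ball.mem_nhds (by simp))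
    have h4 : PP p = (fun u => ∏' n : ℕ, (1 + -(u * p ^ n))) := by
      funext u; simp [PP, sub_eq_add_neg]
    rw [h4]; exact h3
  · refine Filter.Eventually.of_forall fun n => ?_
    apply Differentiable.differentiableOn
    fun_prop

lemma circ_param (G : ℂ → ℂ) (R : ℝ) (hR : 0 < R) :
    (∮ z in C(0, R), (z - 0)⁻¹ • G z) = 2 * Real.pi * I * ∫ y in (0:ℝ)..1, G (R * exp (2 * Real.pi * I * y)) := by
  rw [circleIntegral]
  have := intervalIntegral.integral_comp_mul_left (a := 0) (b := 1) (fun θ : ℝ => G (R * exp (θ * I))) (c := 2 * Real.pi) (by positivity)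
  have e : (∫ y in (0:ℝ)..1, G (R * exp (2 * Real.pi * I * y))) = ∫ y in (0:ℝ)..1, G (R * exp ((2 * Real.pi * y : ℝ) * I)) := by
    congr 1; ext y; push_cast; ring_nf
  rw [e, this]
  simp only [mul_zero, mul_one, deriv_circleMap, smul_eq_mul, sub_zero, circleMap_zero]
  rw [Complex.real_smul, ← mul_assoc]
  have e2 : (2 * Real.pi * I * ((2 * Real.pi : ℝ)⁻¹ : ℝ) : ℂ) = I := by
    push_cast; field_simp
  rw [e2, ← intervalIntegral.integral_const_mul]
  congr 1; ext θ
  have : (R : ℂ) ≠ 0 := by exact_mod_cast hR.ne'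
  field_simp

lemma contour (G : ℂ → ℂ) (p : ℝ) (hp : 0 < p) (hp1 : p < 1)
    (hG : ∀ z : ℂ, p ≤ ‖z‖ → ‖z‖ ≤ 1 → DifferentiableAt ℂ G z) :
    ∫ y in (0:ℝ)..1, G (exp (2 * Real.pi * I * y)) = ∫ y in (0:ℝ)..1, G (p * exp (2 * Real.pi * I * y)) := by
  have h := circleIntegral_sub_center_inv_smul_eq_of_differentiable_on_annulus_off_countable (c := 0) (f := G) hp hp1.le Set.countable_empty ?_ ?_
  · rw [circ_param G p hp, circ_param G 1 one_pos] at h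
    have h2 : (2 * Real.pi * I : ℂ) ≠ 0 := by simp [Real.pi_ne_zero]
    simpa using mul_left_cancel₀ h2 h
  · intro z hz
    simp at hz
    exact (hG z hz.2 hz.1).continuousAt.continuousWithinAt
  · intro z hz
    simp at hz
    exact hG z hz.2.le hz.1.le
def gfun (q s be L X u v z : ℂ) : ℂ :=
  (q^2*L*X*(1+s^2)*(X^2-q^2) - q^2*s*X^2*v/L*(1-q^2*X^2) - q^3*s*L*X^2*u*(X^2-q^2)
    + q^3*X/L*(1/be+s^2*be)*(1-q^2*X^2))/z
  + (s*X^4/L^2 - q*X^4/(s*be) - q*s*X^4/be - q*s*be*X^4 - q*s^3*be*X^4 + q^2*X^3*v*(1+s^2)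
    + q^2*X^5*u*(1/be+s^2*be) - q^2*s*X^2/L^2 - q^2*s*X^6/L^2 - q^2*s*L^2*X^4
    - q^4*X^5*v*(1+s^2) - q^4*X^3*u*(1/be+s^2*be) + q^4*s*X^4/L^2 + q^4*s*L^2*X^2 + q^4*s*L^2*X^6
    + q^5*X^4*(1/(s*be)+s/be+s*be+s^3*be) - q^6*s*L^2*X^4)
  + (- q*s*X^6*u/L + q*L*X^5*(1/be+s^2*be) - q^2*s*L*X^4*v + q^2*X^7*(1+s^2)/L
    + q^3*s*X^4*u/L - q^3*L*X^7*(1/be+s^2*be) + q^4*s*L*X^6*v - q^4*X^5*(1+s^2)/L) * z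

set_option maxHeartbeats 4000000 in
theorem key (q s be L X u v z : ℂ) (hq : q ≠ 0) (hs : s ≠ 0) (hbe : be ≠ 0) (hL : L ≠ 0)
   (hX : X ≠ 0) (hz : z ≠ 0) (A B C D : ℂ) (hA : A = q*be*s/L) (hB : B = s/L) (hC : C = q*be*s*L)
   (hD : D = q^2*s*L) (Na Nb Nc Nd : ℂ)
   (hNa : Na = 1 - q*s*u*X + q^2*s^2*X^2) (hNb : Nb = 1 - q*s*u/(q^2*X) + q^2*s^2/(q^4*X^2))
   (hNc : Nc = 1 - q/(be*s)*v/X + q^2/(be*s)^2/X^2) (hNd : Nd = 1 - q*be*s*v/X + q^2*(be*s)^2/X^2)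
   (Na' Nc' : ℂ) 
   (hNa' : Na' = 1 - q*s*u/X + q^2*s^2/X^2) (hNc' : Nc' = 1 - q/(be*s)*v*X + q^2/(be*s)^2*X^2)
   (N0 : ℂ) 
   (hN0 : N0 = Na * Nc' * (X^2-q^2) - X^4 * Na' * Nc * (1-q^2*X^2) + 
     (-1 - q^2/be^2 + q/be*(L^2+1/L^2))*((1-X^2)*(1-q^2*X^2)*(X^2-q^2))) :
   Na * Nb * (q^2/(be^2*s^2)) * X^2 * (X^2-q^2) * (1-A*(X*z))*(q^2*(X*z)-C)*(1-A*(X*z)/q^2)*(X*z-C)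
   - Nc * Nd * X^4 * (1-q^2*X^2) * (1-D*(X*z)/q^2)*(X*z-B)*(1-D*(X*z))*(q^2*(X*z)-B)
   - N0 * ((1-D*(X*z))*(q^2*(X*z)-B)*(1-A*(X*z)/q^2)*(X*z-C))
   = q/(L*be) * (-1+q*L*z*u-q^2*L^2*z^2) * (1-A*(X*z)/q^2)*(X*z-C) * gfun q s be L X u v (q^2*z)
    - L * (-1+z/L*v-z^2/L^2) * (1-D*(X*z))*(q^2*(X*z)-B) * gfun q s be L X u v z := by
  subst hA hB hC hD hN0 hNa hNb hNc hNd hNa' hNc'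
  unfold gfun
  field_simp
  ring

theorem key2 (q s be L X r al z p : ℂ) (hq : q ≠ 0) (hs : s ≠ 0) (hbe : be ≠ 0) (hL : L ≠ 0)
   (hX : X ≠ 0) (hz : z ≠ 0) (hr : r ≠ 0) (hal : al ≠ 0) (hp : p = q ^ 2)
   (A B C D a b c d u v w : ℂ) (hA : A = q*be*s/L) (hB : B = s/L) (hC : C = q*be*s*L)
   (hD : D = q^2*s*L) (ha : a = al*r*L) (hb : b = q*r*L) (hc : c = q^2*al*r/L) (hd : d = q*r/L)
   (hu : u = r+1/r) (hv : v = al*r+1/(al*r)) (hw : w = X*z)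
   (Na Nb Nc Nd : ℂ)
   (hNa : Na = 1 - q*s*u*X + q^2*s^2*X^2) (hNb : Nb = 1 - q*s*u/(q^2*X) + q^2*s^2/(q^4*X^2))
   (hNc : Nc = 1 - q/(be*s)*v/X + q^2/(be*s)^2/X^2) (hNd : Nd = 1 - q*be*s*v/X + q^2*(be*s)^2/X^2)
   (Na' Nc' : ℂ)
   (hNa' : Na' = 1 - q*s*u/X + q^2*s^2/X^2) (hNc' : Nc' = 1 - q/(be*s)*v*X + q^2/(be*s)^2*X^2)
   (N0 : ℂ)
   (hN0 : N0 = Na * Nc' * (X^2-q^2) - X^4 * Na' * Nc * (1-q^2*X^2) +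
     (-1 - q^2/be^2 + q/be*(L^2+1/L^2))*((1-X^2)*(1-q^2*X^2)*(X^2-q^2))) :
   (Na*Nb*be*(q^2/(be^2*s^2))*X^2*(X^2-q^2)) * (be⁻¹*(1-C/(p*w))*(1-C/w)*(1-A*w/p)*(1-A*w))
   + (-(Nc*Nd/be*X^4*(1-q^2*X^2))) * (be*(1-D*w/p)*(1-D*w)*(1-B/(p*w))*(1-B/w))
   - N0 * ((1-C/w)*(1-D*w)*(1-A*w/p)*(1-B/(p*w)))
   = gfun q s be L X u v (p*z)/(X*al*r)*(be⁻¹*al*(1-C/w)*(1-d/(p*z))*(1-A*w/p)*(1-b*z))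
     - gfun q s be L X u v z/(X*al*r)*((1-D*w)*(1-c*z/p)*(1-B/(p*w))*(1-a/z)) := by
  have k := key q s be L X u v z hq hs hbe hL hX hz A B C D hA hB hC hD Na Nb Nc Nd hNa hNb hNc hNd
    Na' Nc' hNa' hNc' N0 hN0
  clear hNa hNb hNc hNd hNa' hNc' hN0
  subst hp
  have e1 : (1-d/(q^2*z))*(1-b*z) = q*r/L/(q^2*z) * (-1+q*L*z*u-q^2*L^2*z^2) := by
    rw [hd, hb, hu]; field_simp; ring
  have e2 : (1-c*z/q^2)*(1-a/z) = al*r*L/z * (-1+z/L*v-z^2/L^2) := by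
    rw [hc, ha, hv]; field_simp; ring
  have r1 : gfun q s be L X u v (q^2*z)/(X*al*r)*(be⁻¹*al*(1-C/w)*(1-d/(q^2*z))*(1-A*w/q^2)*(1-b*z))
     = gfun q s be L X u v (q^2*z)/(X*al*r)*(be⁻¹*al*(1-C/w)*(1-A*w/q^2)*((1-d/(q^2*z))*(1-b*z))) := by ring
  have r2 : gfun q s be L X u v z/(X*al*r)*((1-D*w)*(1-c*z/q^2)*(1-B/(q^2*w))*(1-a/z))
    = gfun q s be L X u v z/(X*al*r)*((1-D*w)*(1-B/(q^2*w))*((1-c*z/q^2)*(1-a/z))) := by ring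
  rw [r1, r2, e1, e2]
  clear hA hB hC hD ha hb hc hd hu hv r1 r2 e1 e2
  generalize gfun q s be L X u v (q^2*z) = g1 at *
  generalize gfun q s be L X u v z = g2 at *
  subst hw
  have h3 : (q^2*(X*z)^2) ≠ 0 := by positivity
  apply mul_left_cancel₀ h3
  rw [show ∀ l1 l2 r1 r2 : ℂ, (l1 = r1) = (l1 - r1 = 0) from fun l1 _ r1 _ => by rw [sub_eq_zero]] <;> try exact 0
  have k' := sub_eq_zero.mpr k
  refine Eq.trans ?_ k'
  field_simp
  ring

def Hfun (p : ℂ) (m n : ℤ) (A B C D a b c d X z : ℂ) : ℂ :=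
  (X*z)^(-n) * z^m * (PP p (C/(X*z)) * PP p (D*(X*z)) * PP p (c*z) * PP p (d/z)) /
    (PP p (A*(X*z)) * PP p (B/(X*z)) * PP p (a/z) * PP p (b*z))

def Gfun (p : ℂ) (m n : ℤ) (A B C D a b c d X : ℂ) (g : ℂ → ℂ) (z : ℂ) : ℂ :=
  g z * ((X*z)^(-n) * z^m * (PP p (p*C/(X*z)) * PP p (D*(X*z)) * PP p (c*z/p) * PP p (d/z)) /
    (PP p (A*(X*z)/p) * PP p (B/(X*z)) * PP p (p*a/z) * PP p (b*z)))

lemma one_sub_ne {u : ℂ} (hu : ‖u‖ < 1) : 1 - u ≠ 0 := by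
  intro h
  have : u = 1 := by linear_combination -h
  rw [this] at hu; simp at hu

theorem pointwise (p : ℂ) (hp0 : p ≠ 0) (hp : ‖p‖ < 1) (m n : ℤ) (A B C D a b c d X z : ℂ)
   (hX : X ≠ 0) (hz : z ≠ 0) (al be : ℂ) (hal : al = p^m) (hbe : be = p^n) (g : ℂ → ℂ)
   (hA : ‖A*(X*z)/p‖ < 1) (hB : ‖B/(p*(X*z))‖ < 1) (ha : ‖a/z‖ < 1) (hb : ‖b*z‖ < 1) (Np Nm N0 : ℂ)
   (key : Np * (be⁻¹*(1-C/(p*(X*z)))*(1-C/(X*z))*(1-A*(X*z)/p)*(1-A*(X*z)))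
     + Nm * (be*(1-D*(X*z)/p)*(1-D*(X*z))*(1-B/(p*(X*z)))*(1-B/(X*z)))
     - N0 * ((1-C/(X*z))*(1-D*(X*z))*(1-A*(X*z)/p)*(1-B/(p*(X*z))))
     = g (p*z)*(be⁻¹*al*(1-C/(X*z))*(1-d/(p*z))*(1-A*(X*z)/p)*(1-b*z))
     - g z*((1-D*(X*z))*(1-c*z/p)*(1-B/(p*(X*z)))*(1-a/z))) :
   Np * Hfun p m n A B C D a b c d (X*p) z + Nm * Hfun p m n A B C D a b c d (X/p) z
     - N0 * Hfun p m n A B C D a b c d X z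
   = Gfun p m n A B C D a b c d X g (p*z) - Gfun p m n A B C D a b c d X g z := by
  have hmul : ∀ u : ℂ, ‖u‖ < 1 → ‖u*p‖ < 1 := by
    intro u hu
    rw [norm_mul]
    nlinarith [norm_nonneg u, norm_nonneg p]
  have hA2 : ‖A*(X*z)‖ < 1 := by
    have := hmul _ hA
    rwa [div_mul_cancel₀ _ hp0] at this
  have hB2 : ‖B/(X*z)‖ < 1 := by
    have := hmul _ hB
    rwa [show B/(p*(X*z))*p = B/(X*z) by field_simp] at this
  obtain ⟨w, hw⟩ : ∃ w, w = X*z := ⟨_, rfl⟩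
  have hw0 : w ≠ 0 := by rw [hw]; exact mul_ne_zero hX hz
  unfold Hfun Gfun
  rw [show X*p*z = p*w by rw [hw]; ring, show X/p*z = w/p by rw [hw]; ring, show X*(p*z) = p*w by rw [hw]; ring]
  rw [← hw] at key hA hB hA2 hB2 ⊢
  have zp1 : (p*w)^(-n) = be⁻¹ * w^(-n) := by rw [mul_zpow, hbe, zpow_neg p]
  have zp2 : (w/p)^(-n) = be * w^(-n) := by rw [div_zpow, hbe, zpow_neg p]; field_simp
  have zp3 : (p*z)^m = al * z^m := by rw [mul_zpow, hal]
  rw [zp1, zp2, zp3]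
  have fA := one_sub_ne hA
  have fA2 := one_sub_ne hA2
  have fB := one_sub_ne hB
  have fB2 := one_sub_ne hB2
  have fa := one_sub_ne ha
  have fb := one_sub_ne hb
  have nA := PP_ne_zero p _ hp (hmul _ hA2)
  have nB := PP_ne_zero p _ hp (hmul _ hB2)
  have na := PP_ne_zero p _ hp (hmul _ ha)
  have nb := PP_ne_zero p _ hp (hmul _ hb)
  rw [show C/(w/p) = C/w*p by field_simp, PP_step p (C/(p*w)) (C/w) hp (by field_simp), PP_step p (C/w) (C/w*p) hp rfl,
    show p*C/w = C/w*p by ring, show p*C/(p*w) = C/w by field_simp, PP_step p (C/w) (C/w*p) hp rfl,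
    show D*(w/p) = D*w/p by ring, PP_step p (D*w/p) (D*w) hp (by field_simp),
    PP_step p (D*w) (D*w*p) hp rfl, show D*(p*w) = D*w*p by ring,
    show c*(p*z)/p = c*z by field_simp, PP_step p (c*z/p) (c*z) hp (by field_simp),
    PP_step p (d/(p*z)) (d/z) hp (by field_simp),
    show A*(w/p) = A*w/p by ring, show A*(p*w)/p = A*w by field_simp, show A*(p*w) = A*w*p by ring,
    PP_step p (A*w/p) (A*w) hp (by field_simp), PP_step p (A*w) (A*w*p) hp rfl,
    show B/(w/p) = B/w*p by field_simp, PP_step p (B/(p*w)) (B/w) hp (by field_simp),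
    PP_step p (B/w) (B/w*p) hp rfl,
    show p*a/(p*z) = a/z by field_simp, show p*a/z = a/z*p by ring, PP_step p (a/z) (a/z*p) hp rfl,
    show b*(p*z) = b*z*p by ring, PP_step p (b*z) (b*z*p) hp rfl]
  generalize PP p (C/w*p) = c1 at *
  generalize PP p (D*w*p) = d1 at *
  generalize PP p (c*z) = e1 at *
  generalize PP p (d/z) = f1 at *
  generalize PP p (A*w*p) = A3 at *
  generalize PP p (B/w*p) = B3 at *
  generalize PP p (a/z*p) = a2 at *
  generalize PP p (b*z*p) = b2 at *
  clear zp1 zp2 zp3 hA hB hA2 hB2 ha hb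
  generalize 1 - C/(p*w) = v1 at *
  generalize 1 - C/w = v2 at *
  generalize 1 - A*w/p = v3 at *
  generalize 1 - A*w = v4 at *
  generalize 1 - D*w/p = v5 at *
  generalize 1 - D*w = v6 at *
  generalize 1 - B/(p*w) = v7 at *
  generalize 1 - B/w = v8 at *
  generalize 1 - d/(p*z) = v9 at *
  generalize 1 - b*z = v10 at *
  generalize 1 - c*z/p = v11 at *
  generalize 1 - a/z = v12 at *
  generalize be⁻¹ = bi at *
  generalize w^(-n) = W1 at *
  generalize z^m = W2 at *
  generalize g (p*z) = g1 at *
  generalize g z = g2 at *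
  have k := congrArg (fun t => W1*W2*c1*d1*e1*f1/(v3*v4*A3*v7*v8*B3*v12*a2*v10*b2) * t) key
  refine Eq.trans (Eq.trans ?_ k) ?_
  · field_simp
  · field_simp

lemma qpow_add (τ u v : ℂ) : qpow τ (u + v) = qpow τ u * qpow τ v := by
  unfold qpow; rw [← Complex.exp_add]; ring_nf

lemma qpow_neg (τ u : ℂ) : qpow τ (-u) = (qpow τ u)⁻¹ := by
  unfold qpow; rw [← Complex.exp_neg]; ring_nf

lemma qpow_sub (τ u v : ℂ) : qpow τ (u - v) = qpow τ u / qpow τ v := by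
  unfold qpow; rw [← Complex.exp_sub]; ring_nf

lemma qpow_ne (τ u : ℂ) : qpow τ u ≠ 0 := Complex.exp_ne_zero _

lemma qpow_zpow (τ u : ℂ) (n : ℤ) : qpow τ u ^ n = qpow τ (n * u) := by
  unfold qpow; rw [← Complex.exp_int_mul]; ring_nf

lemma qpow_two (τ : ℂ) : qpow τ 2 = qpow τ 1 ^ 2 := by
  rw [show (2:ℂ) = 1 + 1 by norm_num, qpow_add]; ring

lemma qpow_half (τ : ℂ) (hτ : τ ≠ 0) : qpow τ (2 * τ)⁻¹ = -1 := by
  unfold qpow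
  rw [show 2 * (Real.pi : ℂ) * I * τ * (2 * τ)⁻¹ = Real.pi * I by field_simp]
  exact Complex.exp_pi_mul_I

lemma qpow_div (τ y : ℂ) (hτ : τ ≠ 0) : qpow τ (y / τ) = exp (2 * Real.pi * I * y) := by
  unfold qpow
  congr 1; field_simp

lemma norm_qpow (t : ℝ) (u : ℂ) : ‖qpow (I * t) u‖ = Real.exp (-(2 * Real.pi * t * u.re)) := by
  unfold qpow
  rw [Complex.norm_exp]
  congr 1
  rw [show 2 * (Real.pi : ℂ) * I * (I * t) * u = ((-(2 * Real.pi * t) : ℝ) : ℂ) * u by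
    push_cast; linear_combination (2 * Real.pi * t * u : ℂ) * I_mul_I]
  rw [Complex.re_ofReal_mul]; ring

lemma qGamma_eq (τ u U : ℂ) (hU : U = -(qpow τ (u + 1))) : 
    qGamma (2 * τ) u = qpow τ (-(u ^ 2) / 8) / PP (qpow τ 2) U := by
  unfold qGamma PP
  congr 1
  · unfold qpow; ring_nf
  · congr 1; ext n
    rw [hU, ← zpow_natCast, qpow_zpow, neg_mul, sub_neg_eq_add, ← qpow_add]
    congr 1; unfold qpow; push_cast; ring_nf

lemma integrand_eq (τ lam α ρ β σ : ℂ) (hτ : τ ≠ 0) (m n : ℤ) (hα : α = 2 * m) (hβ : β = 2 * n)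
    (q s be L r al : ℂ) (hq : q = qpow τ 1) (hs : s = qpow τ σ) (hbe : be = qpow τ β)
    (hL : L = qpow τ (I * lam)) (hr : r = qpow τ ρ) (hal : al = qpow τ α) : 
    ∃ K : ℂ, ∀ (x y : ℂ), 
    (qGamma (2 * τ) (-(2 * τ)⁻¹ + β + σ - Complex.I * lam + x + (y : ℂ) / τ) *
          qGamma (2 * τ) (-1 - (2 * τ)⁻¹ + σ - Complex.I * lam - x - (y : ℂ) / τ) /
        (qGamma (2 * τ) (-(2 * τ)⁻¹ + β + σ + Complex.I * lam - x - (y : ℂ) / τ) *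
          qGamma (2 * τ) (1 - (2 * τ)⁻¹ + σ + Complex.I * lam + x + (y : ℂ) / τ))) *
      (qGamma (2 * τ) (-1 + (2 * τ)⁻¹ + α + ρ + Complex.I * lam - (y : ℂ) / τ) *
          qGamma (2 * τ) ((2 * τ)⁻¹ + ρ + Complex.I * lam + (y : ℂ) / τ) /
        (qGamma (2 * τ) (1 + (2 * τ)⁻¹ + α + ρ - Complex.I * lam + (y : ℂ) / τ) *
          qGamma (2 * τ) ((2 * τ)⁻¹ + ρ - Complex.I * lam - (y : ℂ) / τ))) =
    K * Hfun (q ^ 2) m n (q*be*s/L) (s/L) (q*be*s*L) (q^2*s*L) (al*r*L) (q*r*L) (q^2*al*r/L) (q*r/L)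
      (qpow τ x) (exp (2 * Real.pi * I * y)) := by
  let h := (2 * τ)⁻¹
  let k0 : ℂ := (-((-h + β + σ - I * lam)^2 + (-1 - h + σ - I * lam)^2 - (-h + β + σ + I * lam)^2
    - (1 - h + σ + I * lam)^2) - ((-1 + h + α + ρ + I * lam)^2 + (h + ρ + I * lam)^2
      - (1 + h + α + ρ - I * lam)^2 - (h + ρ - I * lam)^2))/8
  refine ⟨qpow τ k0, fun x y => ?_⟩
  have hh := qpow_half τ hτ
  have hy := qpow_div τ y hτ
  have h2 := qpow_two τ
  rw [← hy]
  obtain ⟨v, hv⟩ : ∃ v, v = y / τ := ⟨_, rfl⟩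
  rw [← hv]
  have nq := qpow_ne τ 1
  have ns := qpow_ne τ σ
  have nbe := qpow_ne τ β
  have nL := qpow_ne τ (I * lam)
  have nr := qpow_ne τ ρ
  have nal := qpow_ne τ α
  have nX := qpow_ne τ x
  have nz := qpow_ne τ v
  rw [qGamma_eq τ (-(2 * τ)⁻¹ + β + σ - Complex.I * lam + x + v) (q*be*s/L * (qpow τ x * qpow τ v))
      (by rw [hq, hs, hbe, hL]; simp only [qpow_add, qpow_sub, qpow_neg, hh]; field_simp),
    qGamma_eq τ (-1 - (2 * τ)⁻¹ + σ - Complex.I * lam - x - v) (s/L / (qpow τ x * qpow τ v))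
      (by rw [hs, hL]; simp only [qpow_add, qpow_sub, qpow_neg, hh]; field_simp),
    qGamma_eq τ (-(2 * τ)⁻¹ + β + σ + Complex.I * lam - x - v) (q*be*s*L / (qpow τ x * qpow τ v))
      (by rw [hq, hs, hbe, hL]; simp only [qpow_add, qpow_sub, qpow_neg, hh]; field_simp),
    qGamma_eq τ (1 - (2 * τ)⁻¹ + σ + Complex.I * lam + x + v) (q^2*s*L * (qpow τ x * qpow τ v))
      (by rw [hq, hs, hL]; simp only [qpow_add, qpow_sub, qpow_neg, hh]; field_simp),
    qGamma_eq τ (-1 + (2 * τ)⁻¹ + α + ρ + Complex.I * lam - v) (al*r*L / qpow τ v)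
      (by rw [hal, hr, hL]; simp only [qpow_add, qpow_sub, qpow_neg, hh]; field_simp),
    qGamma_eq τ ((2 * τ)⁻¹ + ρ + Complex.I * lam + v) (q*r*L * qpow τ v)
      (by rw [hq, hr, hL]; simp only [qpow_add, qpow_sub, qpow_neg, hh]; field_simp),
    qGamma_eq τ (1 + (2 * τ)⁻¹ + α + ρ - Complex.I * lam + v) (q^2*al*r/L * qpow τ v)
      (by rw [hq, hal, hr, hL]; simp only [qpow_add, qpow_sub, qpow_neg, hh]; field_simp),
    qGamma_eq τ ((2 * τ)⁻¹ + ρ - Complex.I * lam - v) (q*r/L / qpow τ v)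
      (by rw [hq, hr, hL]; simp only [qpow_add, qpow_sub, qpow_neg, hh]; field_simp)]
  unfold Hfun
  rw [h2, ← hq]
  have e : qpow τ (-((-(2 * τ)⁻¹ + β + σ - Complex.I * lam + x + v) ^ 2) / 8) *
      qpow τ (-((-1 - (2 * τ)⁻¹ + σ - Complex.I * lam - x - v) ^ 2) / 8) / 
      (qpow τ (-((-(2 * τ)⁻¹ + β + σ + Complex.I * lam - x - v) ^ 2) / 8) * 
      qpow τ (-((1 - (2 * τ)⁻¹ + σ + Complex.I * lam + x + v) ^ 2) / 8)) *
      (qpow τ (-((-1 + (2 * τ)⁻¹ + α + ρ + Complex.I * lam - v) ^ 2) / 8) * 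
      qpow τ (-(((2 * τ)⁻¹ + ρ + Complex.I * lam + v) ^ 2) / 8) / 
      (qpow τ (-((1 + (2 * τ)⁻¹ + α + ρ - Complex.I * lam + v) ^ 2) / 8) * 
      qpow τ (-(((2 * τ)⁻¹ + ρ - Complex.I * lam - v) ^ 2) / 8))) = 
      qpow τ k0 * ((qpow τ x * qpow τ v) ^ (-n) * qpow τ v ^ m) := by
    rw [← qpow_add τ x v, qpow_zpow, qpow_zpow]
    simp only [← qpow_add, ← qpow_sub]
    congr 1
    simp only [k0, h, hα, hβ]
    push_cast
    ring
  have e' := congrArg (fun T => T * (PP (q^2) (q*be*s*L / (qpow τ x * qpow τ v)) * 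
    PP (q^2) (q^2*s*L * (qpow τ x * qpow τ v)) * PP (q^2) (q^2*al*r/L * qpow τ v) * PP (q^2) (q*r/L / qpow τ v) /
    (PP (q^2) (q*be*s/L * (qpow τ x * qpow τ v)) * PP (q^2) (s/L / (qpow τ x * qpow τ v)) * 
      PP (q^2) (al*r*L / qpow τ v) * PP (q^2) (q*r*L * qpow τ v)))) e
  refine Eq.trans (Eq.trans ?_ e') ?_
  · simp only [div_eq_mul_inv, mul_inv, inv_inv]; ring
  · simp only [div_eq_mul_inv]; ring

lemma gauge_eq (τ α ρ β σ : ℂ) (hτ : τ ≠ 0) (a b c d : ℂ)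
    (ha : a = 1 + ρ + σ) (hb : b = 1 - ρ + σ)
    (hc : c = 1 + α + ρ - β - σ) (hd : d = 1 - α - ρ - β - σ)
    (q s be r al : ℂ) (hq : q = qpow τ 1) (hs : s = qpow τ σ) (hbe : be = qpow τ β)
    (hr : r = qpow τ ρ) (hal : al = qpow τ α) : ∃ k0 : ℂ, ∀ x : ℂ, gaugeDelta τ a b c d x = 
      qpow τ (k0 - β * x / 2) * (PP (q^2) (q*be*s/(al*r)/qpow τ x) * PP (q^2) (q*be*s*al*r/qpow τ x)) /
        (PP (q^2) (q*r*s/qpow τ x) * PP (q^2) (q*s/r/qpow τ x)) := by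
  let h := (2 * τ)⁻¹
  refine ⟨-((-1 + h + a)^2+(-1+h+b)^2-(1+h-c)^2-(1+h-d)^2)/8, fun x => ?_⟩
  have hh := qpow_half τ hτ
  have h2 := qpow_two τ
  have nq := qpow_ne τ 1
  have ns := qpow_ne τ σ
  have nbe := qpow_ne τ β
  have nr := qpow_ne τ ρ
  have nal := qpow_ne τ α
  have nX := qpow_ne τ x
  unfold gaugeDelta
  rw [qGamma_eq τ (-1 + (2 * τ)⁻¹ + a - x) (q*r*s/qpow τ x)
      (by rw [hq, hs, hr, ha]; simp only [qpow_add, qpow_sub, qpow_neg, hh]; field_simp),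
    qGamma_eq τ (-1 + (2 * τ)⁻¹ + b - x) (q*s/r/qpow τ x)
      (by rw [hq, hs, hr, hb]; simp only [qpow_add, qpow_sub, qpow_neg, hh]; field_simp),
    qGamma_eq τ (1 + (2 * τ)⁻¹ - c - x) (q*be*s/(al*r)/qpow τ x)
      (by rw [hq, hs, hr, hal, hbe, hc]; simp only [qpow_add, qpow_sub, qpow_neg, hh]; field_simp),
    qGamma_eq τ (1 + (2 * τ)⁻¹ - d - x) (q*be*s*al*r/qpow τ x)
      (by rw [hq, hs, hr, hal, hbe, hd]; simp only [qpow_add, qpow_sub, qpow_neg, hh]; field_simp)]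
  rw [h2, ← hq]
  have e : qpow τ (-((-1 + (2 * τ)⁻¹ + a - x) ^ 2) / 8) * qpow τ (-((-1 + (2 * τ)⁻¹ + b - x) ^ 2) / 8) /
      (qpow τ (-((1 + (2 * τ)⁻¹ - c - x) ^ 2) / 8) * qpow τ (-((1 + (2 * τ)⁻¹ - d - x) ^ 2) / 8)) =
      qpow τ (-((-1 + h + a)^2+(-1+h+b)^2-(1+h-c)^2-(1+h-d)^2)/8 - β * x / 2) := by
    simp only [← qpow_add, ← qpow_sub]
    congr 1
    simp only [h, ha, hb, hc, hd]
    ring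
  rw [← e]
  simp only [div_eq_mul_inv, mul_inv, inv_inv]; ring

lemma PP_at (p : ℂ) (hp : ‖p‖ < 1) (f : ℂ → ℂ) (z : ℂ) (hf : DifferentiableAt ℂ f z) :
    DifferentiableAt ℂ (fun z => PP p (f z)) z :=
  DifferentiableAt.comp z (PP_diff p hp (f z)) hf

lemma Hfun_diff (p : ℂ) (hp : ‖p‖ < 1) (m n : ℤ) (A B C D a b c d X z : ℂ) (hX : X ≠ 0) (hz : z ≠ 0)
    (hA : ‖A*(X*z)‖ < 1) (hB : ‖B/(X*z)‖ < 1) (ha : ‖a/z‖ < 1) (hb : ‖b*z‖ < 1) :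
    DifferentiableAt ℂ (Hfun p m n A B C D a b c d X) z := by
  have hw : X * z ≠ 0 := mul_ne_zero hX hz
  have e : Hfun p m n A B C D a b c d X = fun z => 
    (X*z)^(-n) * z^m * (PP p (C/(X*z)) * PP p (D*(X*z)) * PP p (c*z) * PP p (d/z)) /
    (PP p (A*(X*z)) * PP p (B/(X*z)) * PP p (a/z) * PP p (b*z)) := by
    funext z; rfl
  rw [e]
  have d1 : DifferentiableAt ℂ (fun z : ℂ => X * z) z := by fun_prop
  refine DifferentiableAt.fun_div ?_ ?_ ?_
  · refine DifferentiableAt.fun_mul (DifferentiableAt.fun_mul ?_ ?_) ?_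
    · exact d1.zpow (Or.inl hw)
    · exact differentiableAt_id.zpow (Or.inl hz)
    · refine DifferentiableAt.fun_mul (DifferentiableAt.fun_mul (DifferentiableAt.fun_mul ?_ ?_) ?_) ?_ <;> 
        refine PP_at p hp _ _ ?_ <;> fun_prop (disch := assumption)
  · refine DifferentiableAt.fun_mul (DifferentiableAt.fun_mul (DifferentiableAt.fun_mul ?_ ?_) ?_) ?_ <;> 
        refine PP_at p hp _ _ ?_ <;> fun_prop (disch := assumption)
  · exact mul_ne_zero (mul_ne_zero (mul_ne_zero (PP_ne_zero p _ hp hA) (PP_ne_zero p _ hp hB)) 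
      (PP_ne_zero p _ hp ha)) (PP_ne_zero p _ hp hb)

lemma Gfun_diff (p : ℂ) (hp : ‖p‖ < 1) (m n : ℤ) (A B C D a b c d X z : ℂ) (hX : X ≠ 0) (hz : z ≠ 0)
    (g : ℂ → ℂ) (hg : DifferentiableAt ℂ g z)
    (hA : ‖A*(X*z)/p‖ < 1) (hB : ‖B/(X*z)‖ < 1) (ha : ‖p*a/z‖ < 1) (hb : ‖b*z‖ < 1) :
    DifferentiableAt ℂ (Gfun p m n A B C D a b c d X g) z := by
  have hw : X * z ≠ 0 := mul_ne_zero hX hz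
  have e : Gfun p m n A B C D a b c d X g = fun z => 
    g z * ((X*z)^(-n) * z^m * (PP p (p*C/(X*z)) * PP p (D*(X*z)) * PP p (c*z/p) * PP p (d/z)) /
    (PP p (A*(X*z)/p) * PP p (B/(X*z)) * PP p (p*a/z) * PP p (b*z))) := by
    funext z; rfl
  rw [e]
  have d1 : DifferentiableAt ℂ (fun z : ℂ => X * z) z := by fun_prop
  refine DifferentiableAt.fun_mul hg (DifferentiableAt.fun_div ?_ ?_ ?_)
  · refine DifferentiableAt.fun_mul (DifferentiableAt.fun_mul ?_ ?_) ?_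
    · exact d1.zpow (Or.inl hw)
    · exact differentiableAt_id.zpow (Or.inl hz)
    · refine DifferentiableAt.fun_mul (DifferentiableAt.fun_mul (DifferentiableAt.fun_mul ?_ ?_) ?_) ?_ <;> 
        refine PP_at p hp _ _ ?_ <;> fun_prop (disch := assumption)
  · refine DifferentiableAt.fun_mul (DifferentiableAt.fun_mul (DifferentiableAt.fun_mul ?_ ?_) ?_) ?_ <;> 
        refine PP_at p hp _ _ ?_ <;> fun_prop (disch := assumption)
  · exact mul_ne_zero (mul_ne_zero (mul_ne_zero (PP_ne_zero p _ hp hA) (PP_ne_zero p _ hp hB)) 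
      (PP_ne_zero p _ hp ha)) (PP_ne_zero p _ hp hb)

lemma gfun_diff (q s be L X u v k z : ℂ) (hz : z ≠ 0) : 
    DifferentiableAt ℂ (fun z => gfun q s be L X u v z / k) z := by
  unfold gfun
  refine DifferentiableAt.div_const ?_ k
  refine DifferentiableAt.fun_add (DifferentiableAt.fun_add ?_ ?_) ?_
  · exact (differentiableAt_const _).fun_div differentiableAt_id hz
  · exact differentiableAt_const _
  · exact (differentiableAt_const _).fun_mul differentiableAt_id

lemma circ_ii (G : ℂ → ℂ) (R : ℝ) (hR : 0 < R) (h : ∀ z : ℂ, ‖z‖ = R → DifferentiableAt ℂ G z) : 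
    IntervalIntegrable (fun y : ℝ => G (R * exp (2 * Real.pi * I * y))) volume 0 1 := by
  apply Continuous.intervalIntegrable
  rw [continuous_iff_continuousAt]
  intro y
  have h1 : ‖(R * exp (2 * Real.pi * I * y) : ℂ)‖ = R := by
    rw [norm_mul, show (2 * Real.pi * I * y : ℂ) = ((2 * Real.pi * y : ℝ) : ℂ) * I by push_cast; ring, 
      Complex.norm_exp_ofReal_mul_I, Complex.norm_real, Real.norm_eq_abs, abs_of_pos hR, mul_one]
  have h2 : ContinuousAt (fun y : ℝ => (R * exp (2 * Real.pi * I * y) : ℂ)) y := by fun_prop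
  exact ContinuousAt.comp (g := G) (h _ h1).continuousAt h2

theorem contig (pr : ℝ) (hp0 : 0 < pr) (hp1 : pr < 1) (p : ℂ) (hpp : p = pr) (m n : ℤ) (A B C D a b c d X : ℂ)
    (hX : ‖X‖ = 1) (al be : ℂ) (hal : al = p^m) (hbe : be = p^n) (g : ℂ → ℂ) 
    (hg : ∀ z, z ≠ 0 → DifferentiableAt ℂ g z)
    (hA : ‖A‖ < pr) (hB : ‖B‖ < pr) (ha : ‖a‖ < 1) (hb : ‖b‖ < 1) (Np Nm N0 : ℂ)
    (key : ∀ z, z ≠ 0 → Np * (be⁻¹*(1-C/(p*(X*z)))*(1-C/(X*z))*(1-A*(X*z)/p)*(1-A*(X*z)))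
     + Nm * (be*(1-D*(X*z)/p)*(1-D*(X*z))*(1-B/(p*(X*z)))*(1-B/(X*z)))
     - N0 * ((1-C/(X*z))*(1-D*(X*z))*(1-A*(X*z)/p)*(1-B/(p*(X*z))))
     = g (p*z)*(be⁻¹*al*(1-C/(X*z))*(1-d/(p*z))*(1-A*(X*z)/p)*(1-b*z))
     - g z*((1-D*(X*z))*(1-c*z/p)*(1-B/(p*(X*z)))*(1-a/z))) :
    Np * (∫ y in (0:ℝ)..1, Hfun p m n A B C D a b c d (X*p) (exp (2 * Real.pi * I * y))) 
    + Nm * (∫ y in (0:ℝ)..1, Hfun p m n A B C D a b c d (X/p) (exp (2 * Real.pi * I * y)))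
    - N0 * (∫ y in (0:ℝ)..1, Hfun p m n A B C D a b c d X (exp (2 * Real.pi * I * y))) = 0 := by
  have np : ‖p‖ = pr := by rw [hpp, Complex.norm_real, Real.norm_eq_abs, abs_of_pos hp0]
  have hp : ‖p‖ < 1 := by rw [np]; exact hp1
  have hpne : p ≠ 0 := by rw [hpp]; exact_mod_cast hp0.ne'
  have hXne : X ≠ 0 := by intro h; rw [h] at hX; simp at hX
  have nA0 := norm_nonneg A
  have nB0 := norm_nonneg B
  have na0 := norm_nonneg a
  have nb0 := norm_nonneg b
  have ne0 : ∀ z : ℂ, pr ≤ ‖z‖ → z ≠ 0 := by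
    intro z h h0; rw [h0, norm_zero] at h; linarith
  have bA : ∀ z : ℂ, ‖z‖ ≤ 1 → ‖A*(X*z)/p‖ < 1 := by
    intro z hz
    rw [norm_div, norm_mul, norm_mul, hX, np, div_lt_one hp0]
    nlinarith [norm_nonneg z]
  have bB : ∀ z : ℂ, pr ≤ ‖z‖ → ‖B/(X*z)‖ < 1 := by
    intro z hz
    rw [norm_div, norm_mul, hX, div_lt_one (by linarith)]
    linarith
  have ba : ∀ z : ℂ, pr ≤ ‖z‖ → ‖p*a/z‖ < 1 := by
    intro z hz
    rw [norm_div, norm_mul, np, div_lt_one (by linarith)]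
    nlinarith
  have bb : ∀ z : ℂ, ‖z‖ ≤ 1 → ‖b*z‖ < 1 := by
    intro z hz
    rw [norm_mul]
    nlinarith [norm_nonneg z]
  have ba1 : ∀ z : ℂ, ‖z‖ = 1 → ‖a/z‖ < 1 := by
    intro z hz
    rw [norm_div, hz]; simpa using ha
  have bB1 : ∀ z : ℂ, ‖z‖ = 1 → ‖B/(p*(X*z))‖ < 1 := by
    intro z hz
    rw [norm_div, norm_mul, norm_mul, hX, hz, np, div_lt_one (by linarith)]
    linarith
  have dG : ∀ z : ℂ, pr ≤ ‖z‖ → ‖z‖ ≤ 1 → DifferentiableAt ℂ (Gfun p m n A B C D a b c d X g) z := by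
    intro z h1 h2
    exact Gfun_diff p hp m n A B C D a b c d X z hXne (ne0 z h1) g (hg z (ne0 z h1)) (bA z h2) (bB z h1)
      (ba z h1) (bb z h2)
  have i0 := circ_ii (Hfun p m n A B C D a b c d X) 1 one_pos (by
    intro z hz
    refine Hfun_diff p hp m n A B C D a b c d X z hXne (ne0 z (by linarith)) ?_ (bB z (by linarith)) (ba1 z hz) (bb z hz.le)
    rw [norm_mul, norm_mul, hX, hz]; linarith)
  have ip := circ_ii (Hfun p m n A B C D a b c d (X*p)) 1 one_pos (by
    intro z hz
    refine Hfun_diff p hp m n A B C D a b c d (X*p) z (mul_ne_zero hXne hpne) (ne0 z (by linarith)) ?_ ?_ (ba1 z hz) (bb z hz.le)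
    · rw [norm_mul, norm_mul, norm_mul, hX, hz, np]; nlinarith
    · rw [show X*p*z = p*(X*z) by ring]; exact bB1 z hz)
  have im := circ_ii (Hfun p m n A B C D a b c d (X/p)) 1 one_pos (by
    intro z hz
    refine Hfun_diff p hp m n A B C D a b c d (X/p) z (div_ne_zero hXne hpne) (ne0 z (by linarith)) ?_ ?_ (ba1 z hz) (bb z hz.le)
    · rw [show A*(X/p*z) = A*(X*z)/p by ring]; exact bA z hz.le
    · rw [norm_div, norm_mul, norm_div, hX, hz, np, div_lt_one (by positivity)]
      have : 1 < 1 / pr := by rw [lt_div_iff₀ hp0]; linarith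
      linarith)
  have g1 := circ_ii (Gfun p m n A B C D a b c d X g) 1 one_pos (fun z hz => dG z (by linarith) hz.le)
  have g2 := circ_ii (Gfun p m n A B C D a b c d X g) pr hp0 (fun z hz => dG z hz.ge (by linarith))
  have hc := contour (Gfun p m n A B C D a b c d X g) pr hp0 hp1 dG
  simp only [Complex.ofReal_one, one_mul] at i0 ip im g1
  rw [← intervalIntegral.integral_const_mul, ← intervalIntegral.integral_const_mul, 
    ← intervalIntegral.integral_const_mul, ← intervalIntegral.integral_add (ip.const_mul _) (im.const_mul _),
    ← intervalIntegral.integral_sub ((ip.const_mul _).add (im.const_mul _)) (i0.const_mul _)]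
  rw [← sub_eq_zero.mpr hc.symm, ← intervalIntegral.integral_sub g2 g1]
  congr 1
  funext y
  have hz : ‖exp (2 * Real.pi * I * y : ℂ)‖ = 1 := by
    rw [show (2 * Real.pi * I * y : ℂ) = ((2 * Real.pi * y : ℝ) : ℂ) * I by push_cast; ring, 
      Complex.norm_exp_ofReal_mul_I]
  rw [← hpp]
  exact pointwise p hpne hp m n A B C D a b c d X _ hXne (exp_ne_zero _) al be hal hbe g (bA _ hz.le) (bB1 _ hz)
    (ba1 _ hz) (bb _ hz.le) Np Nm N0 (key _ (exp_ne_zero _))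

/-- The gauged matrix coefficient `F_λ(x) = Δ(x)⁻¹·φ_λ(x)` satisfies the Askey-Wilson
second order difference equation `A(x)(F(x+2)−F(x)) + A(−x)(F(x−2)−F(x)) = E(λ;β)F(x)`
for generic `x ∈ iℝ` at which `Δ` is defined and nonzero at `x`, `x±2`. -/
theorem gauged_phiMat_AskeyWilson (t : ℝ) (ht : 0 < t) (τ : ℂ)
    (hτ : τ = Complex.I * (t : ℂ)) (lam : ℝ) (m n : ℤ) (hm : 0 < m) (hn : 0 < n)
    (α β : ℂ) (hα : α = 2 * (m : ℂ)) (hβ : β = 2 * (n : ℂ))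
    (ρ σ : ℝ) (hρ : 3 ≤ ρ) (hσ : 3 ≤ σ) (a b c d : ℂ)
    (ha : a = 1 + (ρ : ℂ) + (σ : ℂ)) (hb : b = 1 - (ρ : ℂ) + (σ : ℂ))
    (hc : c = 1 + α + (ρ : ℂ) - β - (σ : ℂ)) (hd : d = 1 - α - (ρ : ℂ) - β - (σ : ℂ))
    (F : ℂ → ℂ)
    (hF : ∀ x : ℂ, F x = (gaugeDelta τ a b c d x)⁻¹ * phiMat τ (lam : ℂ) α (ρ : ℂ) β (σ : ℂ) x) :
    ∀ x : ℂ, x.re = 0 →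
      qpow τ (2 * x) ≠ 1 → qpow τ (2 * x) ≠ qpow τ 2 → qpow τ (2 * x) ≠ qpow τ (-2) →
      gaugeDeltaDefined τ a b c d x → gaugeDeltaDefined τ a b c d (x + 2) →
      gaugeDeltaDefined τ a b c d (x - 2) →
      gaugeDelta τ a b c d x ≠ 0 → gaugeDelta τ a b c d (x + 2) ≠ 0 →
      gaugeDelta τ a b c d (x - 2) ≠ 0 →
      awA τ a b c d x * (F (x + 2) - F x) + awA τ a b c d (-x) * (F (x - 2) - F x) =
        eigenE τ (lam : ℂ) β * F x := by
  intro x hx hx1 hx2 hx3 _ _ _ hD0 hDp hDm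
  have hτ0 : τ ≠ 0 := by
    rw [hτ]; exact mul_ne_zero I_ne_zero (by exact_mod_cast ht.ne')
  obtain ⟨q, hq⟩ : ∃ q, q = qpow τ 1 := ⟨_, rfl⟩
  obtain ⟨s, hs⟩ : ∃ s, s = qpow τ σ := ⟨_, rfl⟩
  obtain ⟨be, hbe⟩ : ∃ be, be = qpow τ β := ⟨_, rfl⟩
  obtain ⟨L, hL⟩ : ∃ L, L = qpow τ (I * lam) := ⟨_, rfl⟩
  obtain ⟨r, hr⟩ : ∃ r, r = qpow τ ρ := ⟨_, rfl⟩
  obtain ⟨al, hal⟩ : ∃ al, al = qpow τ α := ⟨_, rfl⟩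
  obtain ⟨X, hX⟩ : ∃ X, X = qpow τ x := ⟨_, rfl⟩
  have nq : q ≠ 0 := hq ▸ qpow_ne _ _
  have ns : s ≠ 0 := hs ▸ qpow_ne _ _
  have nbe : be ≠ 0 := hbe ▸ qpow_ne _ _
  have nL : L ≠ 0 := hL ▸ qpow_ne _ _
  have nr : r ≠ 0 := hr ▸ qpow_ne _ _
  have nal : al ≠ 0 := hal ▸ qpow_ne _ _
  have nX : X ≠ 0 := hX ▸ qpow_ne _ _
  have h2 : qpow τ 2 = q ^ 2 := by rw [qpow_two, hq]
  obtain ⟨K, hK⟩ := integrand_eq τ lam α ρ β σ hτ0 m n hα hβ q s be L r al hq hs hbe hL hr hal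
  obtain ⟨k0, hk0⟩ := gauge_eq τ α ρ β σ hτ0 a b c d ha hb hc hd q s be r al hq hs hbe hr hal
  have hXp : qpow τ (x + 2) = X * q ^ 2 := by rw [qpow_add, h2, hX]
  have hXm : qpow τ (x - 2) = X / q ^ 2 := by rw [qpow_sub, h2, hX]
  have phi : ∀ x : ℂ, phiMat τ lam α ρ β σ x = K * ∫ y in (0:ℝ)..1,
      Hfun (q ^ 2) m n (q*be*s/L) (s/L) (q*be*s*L) (q^2*s*L) (al*r*L) (q*r*L) (q^2*al*r/L) (q*r/L)
      (qpow τ x) (exp (2 * Real.pi * I * y)) := by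
    intro x
    unfold phiMat
    rw [← intervalIntegral.integral_const_mul]
    congr 1
    funext y
    exact hK x y
  obtain ⟨u, hu⟩ : ∃ u, u = r + 1/r := ⟨_, rfl⟩
  obtain ⟨v, hv⟩ : ∃ v, v = al*r + 1/(al*r) := ⟨_, rfl⟩
  obtain ⟨Na, hNa⟩ : ∃ N, N = 1 - q*s*u*X + q^2*s^2*X^2 := ⟨_, rfl⟩
  obtain ⟨Nb, hNb⟩ : ∃ N, N = 1 - q*s*u/(q^2*X) + q^2*s^2/(q^4*X^2) := ⟨_, rfl⟩
  obtain ⟨Nc, hNc⟩ : ∃ N, N = 1 - q/(be*s)*v/X + q^2/(be*s)^2/X^2 := ⟨_, rfl⟩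
  obtain ⟨Nd, hNd⟩ : ∃ N, N = 1 - q*be*s*v/X + q^2*(be*s)^2/X^2 := ⟨_, rfl⟩
  obtain ⟨Na', hNa'⟩ : ∃ N, N = 1 - q*s*u/X + q^2*s^2/X^2 := ⟨_, rfl⟩
  obtain ⟨Nc', hNc'⟩ : ∃ N, N = 1 - q/(be*s)*v*X + q^2/(be*s)^2*X^2 := ⟨_, rfl⟩
  obtain ⟨N0, hN0⟩ : ∃ N, N = Na * Nc' * (X^2-q^2) - X^4 * Na' * Nc * (1-q^2*X^2) +
     (-1 - q^2/be^2 + q/be*(L^2+1/L^2))*((1-X^2)*(1-q^2*X^2)*(X^2-q^2)) := ⟨_, rfl⟩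
  -- norms
  have nrm : ∀ w : ℂ, ‖qpow τ w‖ = Real.exp (-(2 * Real.pi * t * w.re)) := by
    intro w; rw [hτ]; exact norm_qpow t w
  have hpt : 0 < 2 * Real.pi * t := by positivity
  have hnR : (1:ℝ) ≤ n := by exact_mod_cast hn
  have hmR : (1:ℝ) ≤ m := by exact_mod_cast hm
  have hreal : (q ^ 2 : ℂ) = ((Real.exp (-(2 * Real.pi * t * 2)) : ℝ) : ℂ) := by
    rw [← h2, hτ, qpow]
    push_cast
    congr 1
    linear_combination (4 * Real.pi * t : ℂ) * I_mul_I
  have alp : al = (q ^ 2) ^ m := by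
    rw [← h2, qpow_zpow, hal, hα]; ring_nf
  have bep : be = (q ^ 2) ^ n := by
    rw [← h2, qpow_zpow, hbe, hβ]; ring_nf
  have hXn : ‖X‖ = 1 := by rw [hX, nrm, hx]; simp
  have bA : ‖q*be*s/L‖ < Real.exp (-(2 * Real.pi * t * 2)) := by
    rw [show q*be*s/L = qpow τ (1 + β + σ - I * lam) by
      rw [qpow_sub, qpow_add, qpow_add, hq, hbe, hs, hL], nrm, Real.exp_lt_exp]
    have : (1 + β + σ - I * lam).re = 1 + 2 * n + σ := by simp [hβ]
    rw [this]; nlinarith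
  have bB : ‖s/L‖ < Real.exp (-(2 * Real.pi * t * 2)) := by
    rw [show s/L = qpow τ (σ - I * lam) by
      rw [qpow_sub, hs, hL], nrm, Real.exp_lt_exp]
    have : (σ - I * lam : ℂ).re = σ := by simp
    rw [this]; nlinarith
  have ba : ‖al*r*L‖ < 1 := by
    rw [show al*r*L = qpow τ (α + ρ + I * lam) by
      rw [qpow_add, qpow_add, hal, hr, hL], nrm, Real.exp_lt_one_iff]
    have : (α + ρ + I * lam).re = 2 * m + ρ := by simp [hα]
    rw [this]; nlinarith
  have bb : ‖q*r*L‖ < 1 := by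
    rw [show q*r*L = qpow τ (1 + ρ + I * lam) by
      rw [qpow_add, qpow_add, hq, hr, hL], nrm, Real.exp_lt_one_iff]
    have : (1 + ρ + I * lam : ℂ).re = 1 + ρ := by simp
    rw [this]; nlinarith
  have hmain := contig (Real.exp (-(2 * Real.pi * t * 2))) (Real.exp_pos _)
    (by rw [Real.exp_lt_one_iff]; linarith) (q ^ 2) hreal m n (q*be*s/L) (s/L) (q*be*s*L) (q^2*s*L)
    (al*r*L) (q*r*L) (q^2*al*r/L) (q*r/L) X hXn al be alp bep
    (fun z => gfun q s be L X u v z/(X*al*r)) (fun z hz => gfun_diff q s be L X u v _ z hz)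
    bA bB ba bb (Na*Nb*be*(q^2/(be^2*s^2))*X^2*(X^2-q^2)) (-(Nc*Nd/be*X^4*(1-q^2*X^2))) N0
    (fun z hz => key2 q s be L X r al z (q^2) nq ns nbe nL nX hz nr nal rfl _ _ _ _ _ _ _ _ u v (X*z)
      rfl rfl rfl rfl rfl rfl rfl rfl hu hv rfl Na Nb Nc Nd hNa hNb hNc hNd Na' Nc' hNa' hNc' N0 hN0)
  have php := phi (x + 2)
  have phm := phi (x - 2)
  have ph0 := phi x
  rw [hXp] at php
  rw [hXm] at phm
  rw [← hX] at ph0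
  have hm2 : (Na*Nb*be*(q^2/(be^2*s^2))*X^2*(X^2-q^2)) * phiMat τ lam α ρ β σ (x + 2)
      + (-(Nc*Nd/be*X^4*(1-q^2*X^2))) * phiMat τ lam α ρ β σ (x - 2)
      - N0 * phiMat τ lam α ρ β σ x = 0 := by
    rw [php, phm, ph0]
    linear_combination K * hmain
  clear hmain php phm ph0 phi hK bA bB ba bb nrm
  -- non-vanishing
  have hX2 : qpow τ (2 * x) = X ^ 2 := by
    rw [show 2 * x = x + x by ring, qpow_add, hX]; ring
  have d1 : 1 - X ^ 2 ≠ 0 := by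
    intro h; apply hx1; rw [hX2]; linear_combination -h
  have d2 : X ^ 2 - q ^ 2 ≠ 0 := by
    intro h; apply hx2; rw [hX2, h2]; linear_combination h
  have d3 : 1 - q ^ 2 * X ^ 2 ≠ 0 := by
    intro h; apply hx3; rw [hX2, qpow_neg, h2]
    exact eq_inv_of_mul_eq_one_left (by linear_combination -h)
  have d3s : 1 - X ^ 2 * q ^ 2 ≠ 0 := by rw [mul_comm]; exact d3
  -- the coefficients
  have E0 : eigenE τ lam β = -1 - q^2/be^2 + q/be*(L^2+1/L^2) := by
    unfold eigenE
    rw [show 2 - 2 * β = 1 + 1 - β - β by ring, show 2 * I * (lam : ℂ) = I * lam + I * lam by ring]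
    simp only [qpow_add, qpow_sub, qpow_neg, ← hq, ← hbe, ← hL]
    field_simp
  have A1 : awA τ a b c d x = Na * Nc' / ((1 - X^2) * (1 - q^2 * X^2)) := by
    unfold awA
    rw [hX2, qpow_add τ 2, hX2, h2, ha, hb, hc, hd, hNa, hNc', hu, hv]
    congr 1
    simp only [qpow_add, qpow_sub, ← hq, ← hbe, ← hs, ← hr, ← hal, ← hX]
    field_simp
    ring
  have A2 : awA τ a b c d (-x) = -(X^4 * Na' * Nc) / ((1 - X^2) * (X^2 - q^2)) := by
    have e1 : qpow τ (2 * -x) = 1 / X ^ 2 := by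
      rw [show 2 * -x = -(2 * x) by ring, qpow_neg, hX2]; simp
    have e2 : (1 - 1 / X ^ 2) * (1 - q ^ 2 * (1 / X ^ 2)) = -((1 - X^2) * (X^2 - q^2)) / X ^ 4 := by
      field_simp; ring
    unfold awA
    rw [e1, qpow_add τ 2, e1, h2, e2]
    have e3 : (1 - qpow τ (a + -x)) * (1 - qpow τ (b + -x)) * (1 - qpow τ (c + -x)) *
        (1 - qpow τ (d + -x)) = Na' * Nc := by
      rw [ha, hb, hc, hd, hNa', hNc, hu, hv]
      simp only [qpow_add, qpow_sub, qpow_neg, ← hq, ← hbe, ← hs, ← hr, ← hal, ← hX]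
      field_simp
      ring
    rw [e3]
    field_simp
  -- the gauge factor
  have g0 := hk0 x
  have gp := hk0 (x + 2)
  have gm := hk0 (x - 2)
  have kp : qpow τ (k0 - β * (x + 2) / 2) = qpow τ (k0 - β * x / 2) / be := by
    rw [hbe, ← qpow_sub]; ring_nf
  have km : qpow τ (k0 - β * (x - 2) / 2) = qpow τ (k0 - β * x / 2) * be := by
    rw [hbe, ← qpow_add]; ring_nf
  have hpn : ‖q ^ 2‖ < 1 := by
    rw [hreal, Complex.norm_real, Real.norm_eq_abs, abs_of_pos (Real.exp_pos _), Real.exp_lt_one_iff]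
    linarith
  have nk := qpow_ne τ (k0 - β * x / 2)
  rw [← hX] at g0
  rw [kp, hXp] at gp
  rw [km, hXm] at gm
  generalize qpow τ (k0 - β * x / 2) = k at *
  have st : ∀ w : ℂ, PP (q^2) (w/(X*q^2)) = (1 - w/(X*q^2)) * PP (q^2) (w/X) := fun w =>
    PP_step _ _ _ hpn (by field_simp)
  have st2 : ∀ w : ℂ, PP (q^2) (w/X) = (1 - w/X) * PP (q^2) (w/(X/q^2)) := fun w =>
    PP_step _ _ _ hpn (by field_simp)
  simp only [st] at gp
  have gp' := gp
  have g0' := g0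
  rw [gp] at hDp
  simp only [st2] at g0'
  have hD0' := hD0
  rw [g0'] at hD0'
  rw [g0] at hD0
  simp only [ne_eq, div_eq_zero_iff, mul_eq_zero, not_or] at hDp hD0 hD0'
  obtain ⟨⟨-, ⟨y1, z1⟩, ⟨y2, z2⟩⟩, ⟨y3, z3⟩, ⟨y4, z4⟩⟩ := hDp
  obtain ⟨⟨-, ⟨y5, z5⟩, ⟨y6, z6⟩⟩, ⟨y7, z7⟩, ⟨y8, z8⟩⟩ := hD0'
  have fNa' : Na' = (1 - q*r*s/X) * (1 - q*s/r/X) := by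
    rw [hNa', hu]; field_simp; ring
  have fNb : Nb = (1 - q*r*s/(X*q^2)) * (1 - q*s/r/(X*q^2)) := by
    rw [hNb, hu]; field_simp; ring
  have fNc' : Nc' = (q^2/(be^2*s^2))*X^2*((1 - q*be*s/(al*r)/(X*q^2)) * (1 - q*be*s*al*r/(X*q^2))) := by
    rw [hNc', hv]; field_simp; ring
  have fNd : Nd = (1 - q*be*s/(al*r)/X) * (1 - q*be*s*al*r/X) := by
    rw [hNd, hv]; field_simp; ring
  have R1 : awA τ a b c d x * (gaugeDelta τ a b c d (x + 2))⁻¹ =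
      (Na*Nb*be*(q^2/(be^2*s^2))*X^2*(X^2-q^2)) / ((1-X^2)*(1-q^2*X^2)*(X^2-q^2)) *
        (gaugeDelta τ a b c d x)⁻¹ := by
    rw [A1, gp, g0, fNc', fNb]
    generalize PP (q^2) (q*be*s/(al*r)/X) = w1 at *
    generalize PP (q^2) (q*be*s*al*r/X) = w2 at *
    generalize PP (q^2) (q*r*s/X) = w3 at *
    generalize PP (q^2) (q*s/r/X) = w4 at *
    generalize 1 - q*be*s/(al*r)/(X*q^2) = w5 at *
    generalize 1 - q*be*s*al*r/(X*q^2) = w6 at *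
    generalize 1 - q*r*s/(X*q^2) = w7 at *
    generalize 1 - q*s/r/(X*q^2) = w8 at *
    field_simp
  have R2 : awA τ a b c d (-x) * (gaugeDelta τ a b c d (x - 2))⁻¹ =
      (-(Nc*Nd/be*X^4*(1-q^2*X^2))) / ((1-X^2)*(1-q^2*X^2)*(X^2-q^2)) *
        (gaugeDelta τ a b c d x)⁻¹ := by
    rw [A2, gm, g0', fNa', fNd]
    generalize PP (q^2) (q*be*s/(al*r)/(X/q^2)) = w1 at *
    generalize PP (q^2) (q*be*s*al*r/(X/q^2)) = w2 at *
    generalize PP (q^2) (q*r*s/(X/q^2)) = w3 at *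
    generalize PP (q^2) (q*s/r/(X/q^2)) = w4 at *
    generalize 1 - q*be*s/(al*r)/X = w5 at *
    generalize 1 - q*be*s*al*r/X = w6 at *
    generalize 1 - q*r*s/X = w7 at *
    generalize 1 - q*s/r/X = w8 at *
    field_simp
  have R3 : awA τ a b c d x + awA τ a b c d (-x) + eigenE τ lam β =
      N0 / ((1-X^2)*(1-q^2*X^2)*(X^2-q^2)) := by
    rw [A1, A2, E0, hN0, eq_div_iff (mul_ne_zero (mul_ne_zero d1 d3) d2)]
    generalize (-1 - q^2/be^2 + q/be*(L^2+1/L^2)) = E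
    field_simp
    ring
  rw [hF, hF, hF]
  linear_combination phiMat τ lam α ρ β σ (x + 2) * R1 + phiMat τ lam α ρ β σ (x - 2) * R2
    - (gaugeDelta τ a b c d x)⁻¹ * phiMat τ lam α ρ β σ x * R3
    + (gaugeDelta τ a b c d x)⁻¹ / ((1-X^2)*(1-q^2*X^2)*(X^2-q^2)) * hm2
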